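/- Let G₂ = ⟨g₁, g₂ ∣ g₂g₁ = g₁^{-1}g₂⟩ and let α₀, α₁, β₀, β₁ ∈ Aut(G₂) be the automorphisms determined by: α₀(g₁)=g₁, α₀(g₂)=g₂^{-1}; α₁(g₁)=g₁, α₁(g₂)=g₁g₂^{-1}; β₀(g₁)=g₁^{-1}, β₀(g₂)=g₂; β₁(g₁)=g₁^{-1}, β₁(g₂)=g₁g₂. Then for every φ ∈ Aut(G₂) there exists exactly one ψ ∈ {α₀, α₁, β₀, β₁} such that G₂ ⋊_φ ℤ is isomorphic to G₂ ⋊_ψ ℤ; in particular the four groups G₂ ⋊_{α₀} ℤ, G₂ ⋊_{α₁} ℤ, G₂ ⋊_{β₀} ℤ, G₂ ⋊_{β₁} ℤ are pairwise non-isomorphic. -/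

import Mathlib

/-- The single relator `g₂ g₁ g₂⁻¹ g₁` presenting the Klein bottle group
`⟨g₁, g₂ ∣ g₂ g₁ = g₁⁻¹ g₂⟩`. -/
def kleinRels : Set (FreeGroup (Fin 2)) :=
  {FreeGroup.of 1 * FreeGroup.of 0 * (FreeGroup.of 1)⁻¹ * FreeGroup.of 0}

/-!
Every automorphism of `⟨a, b ∣ b a = a⁻¹ b⟩` has the form `a ↦ a ^ e`, `b ↦ a ^ k * b ^ d` with
`e, d = ±1`. Composing it with the conjugation by `a` replaces `k` by `k + 2`, and composing it with
the conjugation by `b` replaces `(e, k)` by `(-e, -k)`; neither changes the semidirect product with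
`ℤ`, so only `d` and the parity of `k` matter. Conversely, the abelianization of the semidirect
product is `ℤ ⊕ ⟨x, y ∣ 2 x = 0, k x + d y = y⟩`. Its homomorphisms to `ℤ/2` do not see `d` and
their number depends on the parity of `k`, while its homomorphisms to `ℤ/3` kill `x` and their
number depends on `d`.
-/

/-- The algebraic mapping torus `H ⋊_φ ℤ` of an automorphism `φ`, with `ℤ` written
multiplicatively. -/
abbrev MappingTorus {H : Type*} [Group H] (φ : MulAut H) : Type _ :=
  SemidirectProduct H (Multiplicative ℤ) (zpowersHom (MulAut H) φ)

namespace MappingTorus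

open SemidirectProduct (inl inr)

variable {H L : Type*} [Group H] [Group L]

theorem semiconj_zpow {f : H → L} {φ : MulAut H} {θ : MulAut L} (h : Function.Semiconj f φ θ)
    (n : ℤ) : Function.Semiconj f ⇑(φ ^ n) ⇑(θ ^ n) := by
  have h_inv : Function.Semiconj f ⇑φ⁻¹ ⇑θ⁻¹ :=
    h.inverses_right (fun x => MulAut.apply_inv_self _ φ x) fun x => MulAut.inv_apply_self _ θ x
  induction n with
  | zero => exact fun _ => rfl
  | succ n ih =>
    rw [zpow_add_one, zpow_add_one]
    exact ih.comp_right h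
  | pred n ih =>
    rw [zpow_sub_one, zpow_sub_one]
    exact ih.comp_right h_inv

variable {φ ψ : MulAut H}

/-- The stable letter of the mapping torus: the generator of `ℤ`, which acts on `H` as `φ`. -/
def stableLetter (φ : MulAut H) : MappingTorus φ :=
  inr (Multiplicative.ofAdd 1)

theorem inl_apply (φ : MulAut H) (x : H) :
    (inl (φ x) : MappingTorus φ) = stableLetter φ * inl x * (stableLetter φ)⁻¹ := by
  simpa [stableLetter] using
    SemidirectProduct.inl_aut (φ := zpowersHom (MulAut H) φ) (Multiplicative.ofAdd 1) x

theorem hom_ext {f g : MappingTorus φ →* L} (h_inl : f.comp inl = g.comp inl)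
    (h_stable : f (stableLetter φ) = g (stableLetter φ)) : f = g :=
  SemidirectProduct.hom_ext h_inl (MonoidHom.ext_mint h_stable)

/-- The homomorphism out of the mapping torus that extends `f` and sends the stable letter
to `t`. -/
def lift (f : H →* L) (t : L) (h : ∀ x, f (φ x) = t * f x * t⁻¹) : MappingTorus φ →* L :=
  SemidirectProduct.lift f (zpowersHom L t) fun n => by
    ext x
    simpa [← map_zpow] using semiconj_zpow (f := f) (θ := MulAut.conj t) h n.toAdd x

section lift

variable (f : H →* L) (t : L) (h : ∀ x, f (φ x) = t * f x * t⁻¹)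

@[simp]
theorem lift_comp_inl : (lift f t h).comp inl = f :=
  SemidirectProduct.lift_comp_inl ..

@[simp]
theorem lift_inl (x : H) : lift f t h (inl x) = f x :=
  SemidirectProduct.lift_inl ..

@[simp]
theorem lift_stableLetter : lift f t h (stableLetter φ) = t := by
  simp [lift, stableLetter]

end lift

/-- Composing the monodromy with the conjugation by `c` amounts to replacing the stable letter `t`
by `c * t`. -/
def homOfEqConjMul (c : H) (h : φ = MulAut.conj c * ψ) : MappingTorus φ →* MappingTorus ψ :=
  lift inl (inl c * stableLetter ψ) fun x => by
    simp only [h, MulAut.mul_apply, MulAut.conj_apply, map_mul, map_inv, inl_apply]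
    group

theorem homOfEqConjMul_comp {c c' : H} (h : φ = MulAut.conj c * ψ) (h' : ψ = MulAut.conj c' * φ)
    (hc : c * c' = 1) :
    (homOfEqConjMul c' h').comp (homOfEqConjMul c h) = MonoidHom.id (MappingTorus φ) := by
  refine hom_ext ?_ ?_
  · ext x : 1
    simp only [homOfEqConjMul, MonoidHom.comp_apply, lift_inl, MonoidHom.id_apply]
  · simp only [homOfEqConjMul, MonoidHom.comp_apply, lift_stableLetter, map_mul, lift_inl,
      MonoidHom.id_apply]
    rw [← mul_assoc, ← map_mul, hc, map_one, one_mul]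

theorem nonempty_mulEquiv_of_eq_conj_mul (c : H) (h : φ = MulAut.conj c * ψ) :
    Nonempty (MappingTorus φ ≃* MappingTorus ψ) :=
  have h' : ψ = MulAut.conj c⁻¹ * φ := by rw [h, map_inv, inv_mul_cancel_left]
  ⟨(homOfEqConjMul c h).toMulEquiv (homOfEqConjMul c⁻¹ h')
    (homOfEqConjMul_comp h h' (mul_inv_cancel c)) (homOfEqConjMul_comp h' h (inv_mul_cancel c))⟩

/-- A homomorphism from the mapping torus to an abelian group is a `φ`-invariant homomorphism on
the fibre together with an arbitrary image of the stable letter. -/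
def homEquivOfComm (φ : MulAut H) (A : Type*) [CommGroup A] :
    (MappingTorus φ →* A) ≃ {f : H →* A // f.comp φ.toMonoidHom = f} × A where
  toFun F := (⟨F.comp inl, by ext x; simp [inl_apply]⟩, F (stableLetter φ))
  invFun p := lift p.1.1 p.2 fun x => by simpa using DFunLike.congr_fun p.1.2 x
  left_inv F := hom_ext (by simp) (by simp)
  right_inv p := Prod.ext (Subtype.ext (lift_comp_inl ..)) (lift_stableLetter ..)

end MappingTorus

/-- The Klein bottle group `G₂`. -/
abbrev KleinGroup : Type := PresentedGroup kleinRels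

namespace KleinGroup

/-- The generator `g₁`. -/
def a : KleinGroup := PresentedGroup.of 0

/-- The generator `g₂`. -/
def b : KleinGroup := PresentedGroup.of 1

theorem semiconjBy_b_a : SemiconjBy b a a⁻¹ := by
  have h_rel : b * a * b⁻¹ * a = 1 :=
    PresentedGroup.one_of_mem (rels := kleinRels) (Set.mem_singleton _)
  rwa [SemiconjBy, ← mul_inv_eq_iff_eq_mul, ← mul_eq_one_iff_eq_inv]

theorem semiconjBy_b_zpow_a (m : ℤ) : SemiconjBy b (a ^ m) (a ^ (-m)) := by
  simpa only [inv_zpow'] using semiconjBy_b_a.zpow_right m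

theorem semiconjBy_inv_b_zpow_a (m : ℤ) : SemiconjBy b⁻¹ (a ^ m) (a ^ (-m)) := by
  simpa only [neg_neg] using (semiconjBy_b_zpow_a (-m)).inv_symm_left

theorem semiconjBy_b_zpow_unit_zpow_a (d : ℤˣ) (m : ℤ) :
    SemiconjBy (b ^ (d : ℤ)) (a ^ m) (a ^ (-m)) := by
  rcases Int.units_eq_one_or d with rfl | rfl
  · simpa using semiconjBy_b_zpow_a m
  · simpa using semiconjBy_inv_b_zpow_a m

section UniversalProperty

variable {G : Type*} [Group G]

theorem hom_ext {f g : KleinGroup →* G} (ha : f a = g a) (hb : f b = g b) : f = g :=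
  PresentedGroup.ext (Fin.forall_fin_two.2 ⟨ha, hb⟩)

/-- The homomorphism out of the Klein bottle group with prescribed values on the generators. -/
def lift (x y : G) (h : y * x = x⁻¹ * y) : KleinGroup →* G :=
  PresentedGroup.toGroup (rels := kleinRels) (f := ![x, y]) fun r hr => by
    rw [Set.mem_singleton_iff.1 hr]
    simp [h]

@[simp]
theorem lift_a (x y : G) (h : y * x = x⁻¹ * y) : lift x y h a = x :=
  PresentedGroup.toGroup.of _

@[simp]
theorem lift_b (x y : G) (h : y * x = x⁻¹ * y) : lift x y h b = y :=
  PresentedGroup.toGroup.of _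

end UniversalProperty

theorem closure_a_b : Subgroup.closure {a, b} = ⊤ := by
  have h_range : Set.range (PresentedGroup.of (rels := kleinRels)) = {a, b} := by
    ext x
    simp [a, b, Fin.exists_fin_two, eq_comm]
  rw [← h_range, PresentedGroup.closure_range_of]

theorem exists_eq_zpow_mul_zpow (x : KleinGroup) : ∃ m n : ℤ, x = a ^ m * b ^ n := by
  have hx : x ∈ Subgroup.closure {a, b} := closure_a_b ▸ Subgroup.mem_top x
  induction hx using Subgroup.closure_induction_left with
  | one => exact ⟨0, 0, by simp⟩
  | mul_left _ h_gen _ _ ih =>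
    obtain ⟨m, n, rfl⟩ := ih
    rcases h_gen with rfl | rfl
    · exact ⟨1 + m, n, by rw [zpow_one_add, mul_assoc]⟩
    · exact ⟨-m, 1 + n, by
        rw [zpow_one_add, ← mul_assoc, ← mul_assoc, (semiconjBy_b_zpow_a m).eq]⟩
  | inv_mul_cancel _ h_gen _ _ ih =>
    obtain ⟨m, n, rfl⟩ := ih
    rcases h_gen with rfl | rfl
    · exact ⟨-1 + m, n, by rw [zpow_add, zpow_neg_one, mul_assoc]⟩
    · exact ⟨-m, -1 + n, by
        rw [zpow_add, zpow_neg_one, ← mul_assoc, ← mul_assoc, (semiconjBy_inv_b_zpow_a m).eq]⟩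

theorem zpow_a_injective : Function.Injective fun m : ℤ => a ^ m := fun m n h => by
  let toDihedral : KleinGroup →* DihedralGroup 0 :=
    lift (DihedralGroup.r 1) (DihedralGroup.sr 0) (by simp)
  simpa [toDihedral] using congrArg toDihedral h

theorem hom_a_eq_inv {A : Type*} [CommGroup A] (f : KleinGroup →* A) : f a = (f a)⁻¹ := by
  simpa using semiconjBy_b_a.map f

theorem hom_a_eq_one {A : Type*} [CommGroup A] [IsMulTorsionFree A] (f : KleinGroup →* A) :
    f a = 1 :=
  self_eq_inv.1 (hom_a_eq_inv f)

/-- The homomorphism to `ℤ` that counts the occurrences of `b`. -/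
def bExponent : KleinGroup →* Multiplicative ℤ :=
  lift 1 (Multiplicative.ofAdd 1) (by simp)

theorem bExponent_zpow_mul_zpow (m n : ℤ) :
    bExponent (a ^ m * b ^ n) = Multiplicative.ofAdd n := by
  simp [bExponent, ← ofAdd_zsmul]

theorem exists_apply_a (φ : MulAut KleinGroup) : ∃ e : ℤˣ, φ a = a ^ (e : ℤ) := by
  have h_zpow (θ : MulAut KleinGroup) : ∃ m : ℤ, θ a = a ^ m := by
    obtain ⟨m, n, h⟩ := exists_eq_zpow_mul_zpow (θ a)
    have hn : n = 0 := by
      simpa [h, bExponent_zpow_mul_zpow] using hom_a_eq_one (bExponent.comp θ.toMonoidHom)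
    exact ⟨m, by simpa [hn] using h⟩
  obtain ⟨m, hm⟩ := h_zpow φ
  obtain ⟨m', hm'⟩ := h_zpow φ⁻¹
  have h_mul : m * m' = 1 := zpow_a_injective <| calc
    a ^ (m * m') = φ (φ⁻¹ a) := by rw [hm', map_zpow, hm, zpow_mul]
    _ = a ^ (1 : ℤ) := by rw [MulAut.apply_inv_self, zpow_one]
  exact ⟨Units.mkOfMulEqOne m m' h_mul, hm⟩

theorem exists_apply_b (φ : MulAut KleinGroup) :
    ∃ (k : ℤ) (d : ℤˣ), φ b = a ^ k * b ^ (d : ℤ) := by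
  obtain ⟨k, n, h⟩ := exists_eq_zpow_mul_zpow (φ b)
  obtain ⟨k', n', h'⟩ := exists_eq_zpow_mul_zpow (φ⁻¹ b)
  have hφa : bExponent (φ a) = 1 := hom_a_eq_one (bExponent.comp φ.toMonoidHom)
  have h_mul : n * n' = 1 := Multiplicative.ofAdd.injective <| calc
    Multiplicative.ofAdd (n * n') = bExponent (φ b) ^ n' := by
      rw [h, bExponent_zpow_mul_zpow, ← ofAdd_zsmul, smul_eq_mul, mul_comm]
    _ = bExponent (φ (φ⁻¹ b)) := by
      simp only [h', map_mul, map_zpow, hφa, one_zpow, one_mul]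
    _ = Multiplicative.ofAdd 1 := by
      rw [MulAut.apply_inv_self]
      simpa using bExponent_zpow_mul_zpow 0 1
  exact ⟨k, Units.mkOfMulEqOne n n' h_mul, h⟩

theorem natCard_solutions_zmod_two (r : ZMod 2) (u : ℤˣ) :
    Nat.card {v : ZMod 2 × ZMod 2 // 2 * v.1 = 0 ∧ r * v.1 + (u : ℤ) * v.2 = v.2} =
      if r = 0 then 4 else 2 := by
  rw [Nat.card_eq_fintype_card]
  decide +revert

theorem natCard_solutions_zmod_three (r : ZMod 3) (u : ℤˣ) :
    Nat.card {v : ZMod 3 × ZMod 3 // 2 * v.1 = 0 ∧ r * v.1 + (u : ℤ) * v.2 = v.2} =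
      if u = 1 then 3 else 1 := by
  rw [Nat.card_eq_fintype_card]
  decide +revert

/-- `φ` is the automorphism `a ↦ a ^ e`, `b ↦ a ^ k * b ^ d`; these exponents parametrize the
automorphisms of the Klein bottle group. The signs `e` and `d` are units of `ℤ`. -/
structure HasExponents (φ : MulAut KleinGroup) (e : ℤˣ) (k : ℤ) (d : ℤˣ) : Prop where
  apply_a : φ a = a ^ (e : ℤ)
  apply_b : φ b = a ^ k * b ^ (d : ℤ)

theorem exists_hasExponents (φ : MulAut KleinGroup) : ∃ e k d, HasExponents φ e k d :=
  have ⟨e, ha⟩ := exists_apply_a φ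
  have ⟨k, d, hb⟩ := exists_apply_b φ
  ⟨e, k, d, ha, hb⟩

namespace HasExponents

variable {φ ψ : MulAut KleinGroup} {e e' d d' : ℤˣ} {k k' : ℤ}

theorem eq (hφ : HasExponents φ e k d) (hψ : HasExponents ψ e k d) : φ = ψ :=
  MulEquiv.toMonoidHom_injective <|
    hom_ext (hφ.apply_a.trans hψ.apply_a.symm) (hφ.apply_b.trans hψ.apply_b.symm)

theorem conj_zpow_a_mul (hψ : HasExponents ψ e k d) (i : ℤ) :
    HasExponents (MulAut.conj (a ^ i) * ψ) e (k + 2 * i) d where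
  apply_a := by
    rw [MulAut.mul_apply, MulAut.conj_apply, hψ.apply_a]
    group
  apply_b := calc
    a ^ i * ψ b * (a ^ i)⁻¹ = a ^ (i + k) * (b ^ (d : ℤ) * a ^ (-i)) := by
      rw [hψ.apply_b]
      group
    _ = a ^ (k + 2 * i) * b ^ (d : ℤ) := by
      rw [(semiconjBy_b_zpow_unit_zpow_a d (-i)).eq, ← mul_assoc, ← zpow_add]
      ring_nf

theorem conj_b_mul (hψ : HasExponents ψ e k d) :
    HasExponents (MulAut.conj b * ψ) (-e) (-k) d where
  apply_a := by
    rw [MulAut.mul_apply, MulAut.conj_apply, hψ.apply_a, (semiconjBy_b_zpow_a _).eq,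
      mul_inv_cancel_right, Units.val_neg]
  apply_b := calc
    b * ψ b * b⁻¹ = b * a ^ k * b ^ (d : ℤ) * b⁻¹ := by simp only [hψ.apply_b, mul_assoc]
    _ = a ^ (-k) * b ^ (d : ℤ) := by
      rw [(semiconjBy_b_zpow_a k).eq]
      group

theorem exists_eq_conj_mul (hφ : HasExponents φ e k d) (hψ : HasExponents ψ e' k' d)
    (hk : k ≡ k' [ZMOD 2]) : ∃ c, φ = MulAut.conj c * ψ := by
  rcases eq_or_ne e e' with rfl | he
  · obtain ⟨i, hi⟩ : ∃ i, k = k' + 2 * i := ⟨(k - k') / 2, by grind [Int.ModEq]⟩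
    exact ⟨a ^ i, hφ.eq (hi ▸ hψ.conj_zpow_a_mul i)⟩
  · obtain rfl : e = -e' := Int.units_ne_iff_eq_neg.1 he
    obtain ⟨i, hi⟩ : ∃ i, k = -k' + 2 * i := ⟨(k + k') / 2, by grind [Int.ModEq]⟩
    refine ⟨a ^ i * b, ?_⟩
    rw [map_mul, mul_assoc]
    exact hφ.eq (hi ▸ hψ.conj_b_mul.conj_zpow_a_mul i)

theorem comp_eq_self_iff (hψ : HasExponents ψ e k d) {A : Type*} [CommGroup A]
    (f : KleinGroup →* A) :
    f.comp ψ.toMonoidHom = f ↔ f a ^ k * f b ^ (d : ℤ) = f b := by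
  have hfa : f a ^ (e : ℤ) = f a := by
    rcases Int.units_eq_one_or e with rfl | rfl
    · simp
    · simpa using (hom_a_eq_inv f).symm
  constructor
  · intro h
    simpa [hψ.apply_b] using DFunLike.congr_fun h b
  · intro h
    exact hom_ext (by simpa [hψ.apply_a] using hfa) (by simpa [hψ.apply_b] using h)

/-- A `ψ`-invariant homomorphism to an abelian group, here the additive group of a ring `R`, is
determined by its values `v` on `a` and `b`. -/
def invariantHomEquiv (hψ : HasExponents ψ e k d) (R : Type*) [Ring R] :
    {f : KleinGroup →* Multiplicative R // f.comp ψ.toMonoidHom = f} ≃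
      {v : R × R // 2 * v.1 = 0 ∧ k * v.1 + (d : ℤ) * v.2 = v.2} where
  toFun f := ⟨((f.1 a).toAdd, (f.1 b).toAdd), by
    have h_two : (f.1 a).toAdd = -(f.1 a).toAdd :=
      congrArg Multiplicative.toAdd (hom_a_eq_inv f.1)
    have h_inv := congrArg Multiplicative.toAdd ((hψ.comp_eq_self_iff f.1).1 f.2)
    refine ⟨by rwa [two_mul, ← eq_neg_iff_add_eq_zero], ?_⟩
    simpa only [toAdd_mul, toAdd_zpow, zsmul_eq_mul] using h_inv⟩
  invFun v := ⟨lift (Multiplicative.ofAdd v.1.1) (Multiplicative.ofAdd v.1.2) (by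
      have h_two : v.1.1 = -v.1.1 := by rw [eq_neg_iff_add_eq_zero, ← two_mul, v.2.1]
      rw [mul_comm, ← ofAdd_neg, ← h_two]), by
    rw [hψ.comp_eq_self_iff, lift_a, lift_b]
    simp only [← ofAdd_zsmul, zsmul_eq_mul, ← ofAdd_add, v.2.2]⟩
  left_inv f := Subtype.ext <| hom_ext (by simp) (by simp)
  right_inv v := by simp

theorem natCard_eq_of_mulEquiv (hφ : HasExponents φ e k d) (hψ : HasExponents ψ e' k' d')
    (E : MappingTorus φ ≃* MappingTorus ψ) (R : Type*) [Ring R] [Finite R] :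
    Nat.card {v : R × R // 2 * v.1 = 0 ∧ k * v.1 + (d : ℤ) * v.2 = v.2} =
      Nat.card {v : R × R // 2 * v.1 = 0 ∧ k' * v.1 + (d' : ℤ) * v.2 = v.2} := by
  have h_prod := Nat.card_congr <| (MappingTorus.homEquivOfComm φ (Multiplicative R)).symm.trans <|
    E.monoidHomCongrLeftEquiv.trans <| MappingTorus.homEquivOfComm ψ (Multiplicative R)
  rw [Nat.card_prod, Nat.card_prod] at h_prod
  rw [← Nat.card_congr (hφ.invariantHomEquiv R), ← Nat.card_congr (hψ.invariantHomEquiv R)]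
  exact Nat.eq_of_mul_eq_mul_right Nat.card_pos h_prod

theorem modEq_of_mulEquiv (hφ : HasExponents φ e k d) (hψ : HasExponents ψ e' k' d')
    (E : MappingTorus φ ≃* MappingTorus ψ) : k ≡ k' [ZMOD 2] := by
  have h_card := hφ.natCard_eq_of_mulEquiv hψ E (ZMod 2)
  rw [natCard_solutions_zmod_two, natCard_solutions_zmod_two] at h_card
  have h_inj : ∀ r r' : ZMod 2, (if r = 0 then 4 else 2) = (if r' = 0 then 4 else 2) → r = r' := by
    decide
  exact (ZMod.intCast_eq_intCast_iff k k' 2).1 (h_inj k k' h_card)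

theorem eq_of_mulEquiv (hφ : HasExponents φ e k d) (hψ : HasExponents ψ e' k' d')
    (E : MappingTorus φ ≃* MappingTorus ψ) : d = d' := by
  have h_card := hφ.natCard_eq_of_mulEquiv hψ E (ZMod 3)
  rw [natCard_solutions_zmod_three, natCard_solutions_zmod_three] at h_card
  have h_inj : ∀ u u' : ℤˣ, (if u = 1 then 3 else 1) = (if u' = 1 then 3 else 1) → u = u' := by
    decide
  exact h_inj d d' h_card

theorem nonempty_mulEquiv_iff (hφ : HasExponents φ e k d) (hψ : HasExponents ψ e' k' d') :
    Nonempty (MappingTorus φ ≃* MappingTorus ψ) ↔ k ≡ k' [ZMOD 2] ∧ d = d' := by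
  constructor
  · rintro ⟨E⟩
    exact ⟨hφ.modEq_of_mulEquiv hψ E, hφ.eq_of_mulEquiv hψ E⟩
  · rintro ⟨hk, rfl⟩
    obtain ⟨c, hc⟩ := hφ.exists_eq_conj_mul hψ hk
    exact MappingTorus.nonempty_mulEquiv_of_eq_conj_mul c hc

end HasExponents

end KleinGroup

/-- Let `G₂ = ⟨g₁, g₂ ∣ g₂ g₁ = g₁⁻¹ g₂⟩` be the Klein bottle group and let
`α₀, α₁, β₀, β₁ ∈ Aut(G₂)` be the automorphisms with `α₀ g₁ = g₁`,
`α₀ g₂ = g₂⁻¹`; `α₁ g₁ = g₁`, `α₁ g₂ = g₁ g₂⁻¹`; `β₀ g₁ = g₁⁻¹`, `β₀ g₂ = g₂`;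
`β₁ g₁ = g₁⁻¹`, `β₁ g₂ = g₁ g₂`.  Then for every `φ ∈ Aut(G₂)` there is
exactly one `ψ ∈ {α₀, α₁, β₀, β₁}` such that `G₂ ⋊_φ ℤ ≅ G₂ ⋊_ψ ℤ`; in
particular the four groups `G₂ ⋊_{α₀} ℤ`, `G₂ ⋊_{α₁} ℤ`, `G₂ ⋊_{β₀} ℤ`,
`G₂ ⋊_{β₁} ℤ` are pairwise non-isomorphic. -/
theorem klein_semidirect_classification
    (α₀ α₁ β₀ β₁ : MulAut (PresentedGroup kleinRels))
    (g₁ g₂ : PresentedGroup kleinRels)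
    (hg₁ : g₁ = PresentedGroup.of 0) (hg₂ : g₂ = PresentedGroup.of 1)
    (hα₀ : α₀ g₁ = g₁ ∧ α₀ g₂ = g₂⁻¹)
    (hα₁ : α₁ g₁ = g₁ ∧ α₁ g₂ = g₁ * g₂⁻¹)
    (hβ₀ : β₀ g₁ = g₁⁻¹ ∧ β₀ g₂ = g₂)
    (hβ₁ : β₁ g₁ = g₁⁻¹ ∧ β₁ g₂ = g₁ * g₂)
    (φ : MulAut (PresentedGroup kleinRels)) :
    ∃! ψ : MulAut (PresentedGroup kleinRels),
      ψ ∈ ({α₀, α₁, β₀, β₁} : Set (MulAut (PresentedGroup kleinRels))) ∧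
      Nonempty
        ((SemidirectProduct (PresentedGroup kleinRels) (Multiplicative ℤ)
            (zpowersHom (MulAut (PresentedGroup kleinRels)) φ)) ≃*
         (SemidirectProduct (PresentedGroup kleinRels) (Multiplicative ℤ)
            (zpowersHom (MulAut (PresentedGroup kleinRels)) ψ))) := by
  obtain ⟨rfl, rfl⟩ : g₁ = KleinGroup.a ∧ g₂ = KleinGroup.b := ⟨hg₁, hg₂⟩
  obtain ⟨e, k, d, hφ⟩ := KleinGroup.exists_hasExponents φ
  have iso_α₀ : Nonempty (MappingTorus φ ≃* MappingTorus α₀) ↔ k ≡ 0 [ZMOD 2] ∧ d = -1 :=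
    hφ.nonempty_mulEquiv_iff (e' := 1) ⟨by simpa using hα₀.1, by simpa using hα₀.2⟩
  have iso_α₁ : Nonempty (MappingTorus φ ≃* MappingTorus α₁) ↔ k ≡ 1 [ZMOD 2] ∧ d = -1 :=
    hφ.nonempty_mulEquiv_iff (e' := 1) ⟨by simpa using hα₁.1, by simpa using hα₁.2⟩
  have iso_β₀ : Nonempty (MappingTorus φ ≃* MappingTorus β₀) ↔ k ≡ 0 [ZMOD 2] ∧ d = 1 :=
    hφ.nonempty_mulEquiv_iff (e' := -1) ⟨by simpa using hβ₀.1, by simpa using hβ₀.2⟩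
  have iso_β₁ : Nonempty (MappingTorus φ ≃* MappingTorus β₁) ↔ k ≡ 1 [ZMOD 2] ∧ d = 1 :=
    hφ.nonempty_mulEquiv_iff (e' := -1) ⟨by simpa using hβ₁.1, by simpa using hβ₁.2⟩
  have h_ne : (1 : ℤˣ) ≠ -1 := by decide
  rcases Int.units_eq_one_or d with rfl | rfl <;> rcases Int.emod_two_eq_zero_or_one k with hk | hk
  · refine ⟨β₀, ⟨by simp, iso_β₀.2 ⟨hk, rfl⟩⟩, ?_⟩
    rintro ψ ⟨rfl | rfl | rfl | rfl, hψ⟩ <;> grind [Int.ModEq]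
  · refine ⟨β₁, ⟨by simp, iso_β₁.2 ⟨hk, rfl⟩⟩, ?_⟩
    rintro ψ ⟨rfl | rfl | rfl | rfl, hψ⟩ <;> grind [Int.ModEq]
  · refine ⟨α₀, ⟨by simp, iso_α₀.2 ⟨hk, rfl⟩⟩, ?_⟩
    rintro ψ ⟨rfl | rfl | rfl | rfl, hψ⟩ <;> grind [Int.ModEq]
  · refine ⟨α₁, ⟨by simp, iso_α₁.2 ⟨hk, rfl⟩⟩, ?_⟩
    rintro ψ ⟨rfl | rfl | rfl | rfl, hψ⟩ <;> grind [Int.ModEq]
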